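/- arXiv:2209.09126 — 2 statements merged into one kernel-verified Lean document; each statement's English description precedes it below -/
import Mathlib

section
/- Let d ∈ ℕ, t ≥ 0 and N > t + d. Then there exist constants c, C > 0 depending only on N, d, t such that for every invertible d×d real matrix T: c / (α_d(T)^t |det(T)|) ≤ ∫_{ℝ^d} (1 + ‖Tx‖)^{-N} ‖x‖^t dx ≤ C / (α_d(T)^t |det(T)|). -/
open MeasureTheory

noncomputable section

namespace SelfAffine

/-- Euclidean operator norm of a `d × d` real matrix. -/
def opNorm {d : ℕ} (A : Matrix (Fin d) (Fin d) ℝ) : ℝ :=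
  ‖Matrix.toEuclideanCLM (𝕜 := ℝ) A‖

/-- smallest singular value of an invertible matrix, via `α_d(A) = ‖A⁻¹‖⁻¹`. -/
def alphaMin {d : ℕ} (A : Matrix (Fin d) (Fin d) ℝ) : ℝ := (opNorm A⁻¹)⁻¹

/-- Change of variables for an invertible matrix. -/
lemma integral_comp_aux {d : ℕ} (T : Matrix (Fin d) (Fin d) ℝ) (hT : IsUnit T.det)
    (g : EuclideanSpace ℝ (Fin d) → ℝ) :
    (∫ x, g (Matrix.toEuclideanCLM (𝕜 := ℝ) T x)) = |T.det|⁻¹ * ∫ y, g y := by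
  have hdet : LinearMap.det (Matrix.toEuclideanCLM (𝕜 := ℝ) T).toLinearMap = T.det := by
    rw [Matrix.coe_toEuclideanCLM_eq_toEuclideanLin, Matrix.toEuclideanLin_eq_toLin_orthonormal,
      LinearMap.det_toLin]
  have hne : LinearMap.det (Matrix.toEuclideanCLM (𝕜 := ℝ) T).toLinearMap ≠ 0 := by
    rw [hdet]; exact hT.ne_zero
  have hmap := Measure.map_linearMap_addHaar_eq_smul_addHaar
    (volume : Measure (EuclideanSpace ℝ (Fin d))) hne
  rw [hdet] at hmap
  have hinj : Function.Injective (Matrix.toEuclideanCLM (𝕜 := ℝ) T) :=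
    (LinearMap.equivOfDetNeZero _ hne).injective
  have hemb : MeasurableEmbedding (Matrix.toEuclideanCLM (𝕜 := ℝ) T) :=
    (Matrix.toEuclideanCLM (𝕜 := ℝ) T).continuous.measurableEmbedding hinj
  rw [← hemb.integral_map]
  change ∫ y, g y ∂(Measure.map (Matrix.toEuclideanCLM (𝕜 := ℝ) T).toLinearMap volume) = _
  rw [hmap, integral_smul_measure, ENNReal.toReal_ofReal (abs_nonneg _), abs_inv, smul_eq_mul]

/-- Pointwise upper bound. -/
lemma upper_aux {d : ℕ} {t N : ℝ} (ht : 0 ≤ t)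
    (L : EuclideanSpace ℝ (Fin d) →L[ℝ] EuclideanSpace ℝ (Fin d)) (y : EuclideanSpace ℝ (Fin d)) :
    (1 + ‖y‖) ^ (-N) * ‖L y‖ ^ t ≤ (1 + ‖y‖) ^ (-(N - t)) * ‖L‖ ^ t := by
  have h1 : 0 < 1 + ‖y‖ := by positivity
  have h2 : ‖L y‖ ^ t ≤ ‖L‖ ^ t * (1 + ‖y‖) ^ t := by
    rw [← Real.mul_rpow (norm_nonneg _) h1.le]
    apply Real.rpow_le_rpow (norm_nonneg _) _ ht
    refine (L.le_opNorm y).trans ?_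
    gcongr
    linarith
  have h3 : (1 + ‖y‖) ^ (-(N - t)) = (1 + ‖y‖) ^ (-N) * (1 + ‖y‖) ^ t := by
    rw [← Real.rpow_add h1]; congr 1; ring
  rw [h3]
  calc _ ≤ (1 + ‖y‖) ^ (-N) * (‖L‖ ^ t * (1 + ‖y‖) ^ t) := by gcongr
    _ = _ := by ring

lemma integrable_aux {d : ℕ} {t N : ℝ} (hN : t + d < N) :
    Integrable (fun y : EuclideanSpace ℝ (Fin d) => (1 + ‖y‖) ^ (-(N - t))) := by
  apply integrable_one_add_norm
  rw [finrank_euclideanSpace_fin]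
  linarith

lemma integrable_aux2 {d : ℕ} {t N : ℝ} (ht : 0 ≤ t) (hN : t + d < N)
    (L : EuclideanSpace ℝ (Fin d) →L[ℝ] EuclideanSpace ℝ (Fin d)) :
    Integrable (fun y : EuclideanSpace ℝ (Fin d) => (1 + ‖y‖) ^ (-N) * ‖L y‖ ^ t) := by
  refine ((integrable_aux hN).mul_const (‖L‖ ^ t)).mono' ?_ ?_
  · apply Measurable.aestronglyMeasurable
    fun_prop
  · refine Filter.Eventually.of_forall fun y => ?_
    rw [Real.norm_of_nonneg (by positivity)]
    exact upper_aux ht L y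

lemma lower_aux {d : ℕ} {t N : ℝ} (ht : 0 ≤ t) (hN : t + d < N)
    (L : EuclideanSpace ℝ (Fin d) →L[ℝ] EuclideanSpace ℝ (Fin d)) :
    (volume.real (Metric.ball (0 : EuclideanSpace ℝ (Fin d)) (1 / 4)) * ((3 : ℝ) ^ (-N) *
      (1 / 4 : ℝ) ^ t)) * ‖L‖ ^ t ≤
      ∫ y : EuclideanSpace ℝ (Fin d), (1 + ‖y‖) ^ (-N) * ‖L y‖ ^ t := by
  have hN0 : 0 < N := by have : (0 : ℝ) ≤ d := Nat.cast_nonneg d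
                         linarith
  obtain ⟨v, hv1, hv2⟩ : ∃ v, ‖v‖ ≤ 1 ∧ ‖L‖ / 2 ≤ ‖L v‖ := by
    rcases (norm_nonneg L).eq_or_lt with h | h
    · exact ⟨0, by simp, by simp [← h]⟩
    · obtain ⟨v, h1, h2⟩ := L.exists_lt_apply_of_lt_opNorm (half_lt_self h)
      exact ⟨v, h1.le, h2.le⟩
  have hint := integrable_aux2 ht hN L
  have hvol : volume.real (Metric.ball v (1 / 4)) =
      volume.real (Metric.ball (0 : EuclideanSpace ℝ (Fin d)) (1 / 4)) := by
    simp only [Measure.real, Measure.addHaar_ball_center]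
  calc _ = ∫ y in Metric.ball v (1 / 4), (3 : ℝ) ^ (-N) * ((1 / 4 : ℝ) * ‖L‖) ^ t := by
        rw [setIntegral_const, hvol, Real.mul_rpow (by norm_num) (norm_nonneg _), smul_eq_mul]
        ring
    _ ≤ ∫ y in Metric.ball v (1 / 4), (1 + ‖y‖) ^ (-N) * ‖L y‖ ^ t := by
        refine setIntegral_mono_on (integrableOn_const measure_ball_lt_top.ne)
          hint.integrableOn measurableSet_ball fun y hy => ?_
        rw [mem_ball_iff_norm] at hy
        have hy1 : ‖y‖ ≤ 5 / 4 := by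
          have := norm_sub_norm_le y v
          linarith
        have hy2 : 1 / 4 * ‖L‖ ≤ ‖L y‖ := by
          have h1 := norm_sub_norm_le (L v) (L y)
          rw [← map_sub] at h1
          have h2 := L.le_opNorm (v - y)
          rw [norm_sub_rev] at hy
          have h3 : ‖L‖ * ‖v - y‖ ≤ ‖L‖ * (1 / 4) := by gcongr
          linarith
        have h4 : (3 : ℝ) ^ (-N) ≤ (1 + ‖y‖) ^ (-N) :=
          Real.rpow_le_rpow_of_nonpos (by positivity) (by linarith) (by linarith)
        gcongr
    _ ≤ _ := setIntegral_le_integral hint (Filter.Eventually.of_forall fun y => by positivity)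

/-- **Proposition 3.5.** Let `d ∈ ℕ`, `t ≥ 0` and `N > t + d`. Then, with constants
depending only on `N, d, t`,
`∫_{ℝ^d} (1 + ‖Tx‖)^{-N} ‖x‖^t dx ≈ (α_d(T)^t |det T|)⁻¹`
for every invertible `d × d` real matrix `T`. -/
theorem integral_one_add_norm_rpow_mul_norm_rpow_comparison
    (d : ℕ) (t N : ℝ) (ht : 0 ≤ t) (hN : t + d < N) :
    ∃ c C : ℝ, 0 < c ∧ 0 < C ∧
      ∀ T : Matrix (Fin d) (Fin d) ℝ, IsUnit T.det →
        c / (alphaMin T ^ t * |T.det|) ≤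
            (∫ x : EuclideanSpace ℝ (Fin d),
              (1 + ‖Matrix.toEuclideanCLM (𝕜 := ℝ) T x‖) ^ (-N) * ‖x‖ ^ t) ∧
          (∫ x : EuclideanSpace ℝ (Fin d),
              (1 + ‖Matrix.toEuclideanCLM (𝕜 := ℝ) T x‖) ^ (-N) * ‖x‖ ^ t) ≤
            C / (alphaMin T ^ t * |T.det|) := by
  have hpos : 0 < volume.real (Metric.ball (0 : EuclideanSpace ℝ (Fin d)) (1 / 4)) :=
    ENNReal.toReal_pos (Metric.measure_ball_pos volume _ (by norm_num)).ne'
      measure_ball_lt_top.ne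
  have hC0 : 0 ≤ ∫ y : EuclideanSpace ℝ (Fin d), (1 + ‖y‖) ^ (-(N - t)) :=
    integral_nonneg fun y => by positivity
  refine ⟨volume.real (Metric.ball (0 : EuclideanSpace ℝ (Fin d)) (1 / 4)) * ((3 : ℝ) ^ (-N) *
      (1 / 4 : ℝ) ^ t), (∫ y : EuclideanSpace ℝ (Fin d), (1 + ‖y‖) ^ (-(N - t))) + 1,
      by positivity, by positivity, fun T hT => ?_⟩
  have hinv : ∀ x, Matrix.toEuclideanCLM (𝕜 := ℝ) T⁻¹ (Matrix.toEuclideanCLM (𝕜 := ℝ) T x) = x := by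
    intro x
    rw [← ContinuousLinearMap.mul_apply, ← map_mul, Matrix.nonsing_inv_mul _ hT, map_one,
      ContinuousLinearMap.one_apply]
  have key : (∫ x : EuclideanSpace ℝ (Fin d),
      (1 + ‖Matrix.toEuclideanCLM (𝕜 := ℝ) T x‖) ^ (-N) * ‖x‖ ^ t) = |T.det|⁻¹ *
      ∫ y : EuclideanSpace ℝ (Fin d),
        (1 + ‖y‖) ^ (-N) * ‖Matrix.toEuclideanCLM (𝕜 := ℝ) T⁻¹ y‖ ^ t := by
    rw [← integral_comp_aux T hT]
    simp only [hinv]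
  have hform : ∀ c : ℝ, c / (alphaMin T ^ t * |T.det|) =
      |T.det|⁻¹ * (c * ‖Matrix.toEuclideanCLM (𝕜 := ℝ) T⁻¹‖ ^ t) := by
    intro c
    rw [alphaMin, opNorm, Real.inv_rpow (norm_nonneg _), div_eq_mul_inv, mul_inv, inv_inv]
    ring
  rw [key, hform, hform]
  refine ⟨mul_le_mul_of_nonneg_left (lower_aux ht hN _) (by positivity),
    mul_le_mul_of_nonneg_left ?_ (by positivity)⟩
  calc _ ≤ ∫ y : EuclideanSpace ℝ (Fin d), (1 + ‖y‖) ^ (-(N - t)) *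
          ‖Matrix.toEuclideanCLM (𝕜 := ℝ) T⁻¹‖ ^ t :=
        integral_mono (integrable_aux2 ht hN _) ((integrable_aux hN).mul_const _)
          fun y => upper_aux ht _ y
    _ = (∫ y : EuclideanSpace ℝ (Fin d), (1 + ‖y‖) ^ (-(N - t))) *
          ‖Matrix.toEuclideanCLM (𝕜 := ℝ) T⁻¹‖ ^ t := integral_mul_const _ _
    _ ≤ _ := by gcongr; linarith

end SelfAffine
end
end

section
/- Let A be a d×d invertible real matrix with ‖A‖ < 1, let 𝒜 be a nonempty finite index set, let {a_I}_{I∈𝒜} be vectors in ℝ^d, and fix J ∈ 𝒜. Let G = { Σ_{k=0}^∞ A^k a_{I_{k+1}} : (I_k)_{k≥1} ∈ 𝒜^ℕ } be the attractor of the IFS {x ↦ Ax + a_I}_{I∈𝒜}. Define E = { Σ_{k=0}^∞ A^k a_{I_{k+1}} : I_{2n+1} ∈ 𝒜 and I_{2n+2} = J for all n ≥ 0 }, F = { Σ_{k=0}^∞ A^k a_{I_{k+1}} : I_{2n+1} = J and I_{2n+2} ∈ 𝒜 for all n ≥ 0 }, and v = −Σ_{k=0}^∞ A^k a_J. Then G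 = E + F + v, where E + F + v = { x + y + v : x ∈ E, y ∈ F }. -/
open MeasureTheory Pointwise

noncomputable section

namespace SelfAffine

theorem summable_aux {d : ℕ} (A : Matrix (Fin d) (Fin d) ℝ) (hAnorm : opNorm A < 1)
    {ι : Type*} [Fintype ι] (a : ι → EuclideanSpace ℝ (Fin d)) (s : ℕ → ι) :
    Summable fun k : ℕ => Matrix.toEuclideanCLM (𝕜 := ℝ) (A ^ k) (a (s k)) := by
  have h0 : 0 ≤ opNorm A := norm_nonneg _
  have hs : Summable fun k : ℕ => opNorm A ^ k * ∑ i, ‖a i‖ :=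
    (summable_geometric_of_lt_one h0 hAnorm).mul_right _
  refine Summable.of_norm_bounded hs fun k => ?_
  have h1 : ‖a (s k)‖ ≤ ∑ i, ‖a i‖ :=
    Finset.single_le_sum (f := fun i => ‖a i‖) (fun i _ => norm_nonneg _) (Finset.mem_univ (s k))
  have h2 : ‖Matrix.toEuclideanCLM (𝕜 := ℝ) (A ^ k) (a (s k))‖ ≤ opNorm A ^ k * ‖a (s k)‖ := by
    rw [map_pow]
    induction k generalizing s with
    | zero => simp
    | succ k ih =>
      rw [pow_succ', pow_succ', mul_apply_eq_comp, mul_assoc]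
      refine (ContinuousLinearMap.le_opNorm _ _).trans ?_
      refine mul_le_mul_of_nonneg_left ?_ h0
      exact ih (fun _ => s (k + 1)) (by simpa using h1)
  exact h2.trans (mul_le_mul_of_nonneg_left h1 (pow_nonneg h0 k))

/-- **The decomposition `G = E + F + v` in the proof of Theorem 1.3.**
Let `A` be an invertible `d × d` real matrix with `‖A‖ < 1`, let `𝒜` be a nonempty
finite index set, `{a_I}_{I ∈ 𝒜}` vectors in `ℝ^d`, and fix `J ∈ 𝒜`. Let
`G = { ∑_{k≥0} A^k a_{I_{k+1}} : (I_k)_{k≥1} ∈ 𝒜^ℕ }` be the attractor of the IFS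
`{x ↦ Ax + a_I}_{I ∈ 𝒜}`, let `E` (resp. `F`) be the subset of such sums over sequences
with `I_{2n+2} = J` (resp. `I_{2n+1} = J`) for all `n ≥ 0`, and let
`v = −∑_{k≥0} A^k a_J`. Then `G = E + F + {v}` (pointwise set addition). -/
theorem attractor_eq_add_add_singleton {d : ℕ}
    (A : Matrix (Fin d) (Fin d) ℝ) (hA : IsUnit A.det) (hAnorm : opNorm A < 1)
    (ι : Type*) [Fintype ι] [Nonempty ι]
    (a : ι → EuclideanSpace ℝ (Fin d)) (J : ι) :
    { x : EuclideanSpace ℝ (Fin d) | ∃ s : ℕ → ι,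
        x = ∑' k : ℕ, Matrix.toEuclideanCLM (𝕜 := ℝ) (A ^ k) (a (s k)) } =
      { x : EuclideanSpace ℝ (Fin d) | ∃ s : ℕ → ι, (∀ n : ℕ, s (2 * n + 1) = J) ∧
          x = ∑' k : ℕ, Matrix.toEuclideanCLM (𝕜 := ℝ) (A ^ k) (a (s k)) } +
        { x : EuclideanSpace ℝ (Fin d) | ∃ s : ℕ → ι, (∀ n : ℕ, s (2 * n) = J) ∧
            x = ∑' k : ℕ, Matrix.toEuclideanCLM (𝕜 := ℝ) (A ^ k) (a (s k)) } +
        ({ -∑' k : ℕ, Matrix.toEuclideanCLM (𝕜 := ℝ) (A ^ k) (a J) } :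
          Set (EuclideanSpace ℝ (Fin d))) := by
  have key : ∀ s t u : ℕ → ι, (∀ k, a (s k) = a (t k) + a (u k) - a J) →
      ∑' k : ℕ, Matrix.toEuclideanCLM (𝕜 := ℝ) (A ^ k) (a (s k)) =
      ∑' k : ℕ, Matrix.toEuclideanCLM (𝕜 := ℝ) (A ^ k) (a (t k)) +
      ∑' k : ℕ, Matrix.toEuclideanCLM (𝕜 := ℝ) (A ^ k) (a (u k)) +
      -∑' k : ℕ, Matrix.toEuclideanCLM (𝕜 := ℝ) (A ^ k) (a J) := by
    intro s t u h
    have ht := summable_aux A hAnorm a t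
    have hu := summable_aux A hAnorm a u
    have hJ := summable_aux A hAnorm a (fun _ => J)
    rw [← ht.tsum_add hu, ← sub_eq_add_neg, ← (ht.add hu).tsum_sub hJ]
    refine tsum_congr fun k => ?_
    rw [h k, map_sub, map_add]
  ext x
  simp only [Set.mem_add, Set.mem_ofPred_eq, Set.mem_singleton_iff]
  constructor
  · rintro ⟨s, rfl⟩
    refine ⟨_, ⟨_, ⟨fun k => if k % 2 = 0 then s k else J, fun n => ?_, rfl⟩,
      _, ⟨fun k => if k % 2 = 0 then J else s k, fun n => ?_, rfl⟩, rfl⟩, _, rfl, ?_⟩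
    · exact if_neg (by omega)
    · exact if_pos (by omega)
    · refine (key _ _ _ fun k => ?_).symm
      by_cases hk : k % 2 = 0
      · simp [hk]
      · simp [hk]
  · rintro ⟨_, ⟨_, ⟨t, ht, rfl⟩, _, ⟨u, hu, rfl⟩, rfl⟩, _, rfl, rfl⟩
    refine ⟨fun k => if k % 2 = 0 then t k else u k, (key _ _ _ fun k => ?_).symm⟩
    by_cases hk : k % 2 = 0
    · have h := hu (k / 2)
      rw [show 2 * (k / 2) = k by omega] at h
      simp [hk, h]
    · have h := ht (k / 2)
      rw [show 2 * (k / 2) + 1 = k by omega] at h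
      simp [hk, h]

end SelfAffine
end
end
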